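/- For every positive integer n, θ(n) = ∑_{t ≥ p_{n+1}, gcd(t, p_n#) = 1} 2^{-t}, where the sum is over all integers t ≥ p_{n+1} that are coprime to p_n#. -/

import Mathlib

/-!
Expanding `1 / (2 ^ d - 1)` as the geometric series `∑ 2 ^ (-t)` over the positive multiples `t`
of `d` and exchanging the sums, the coefficient of `2 ^ (-t)` in
`∑ d ∣ P, μ(d) / (2 ^ d - 1)`, with `P = p_n#`, is `∑ d ∣ gcd(t, P), μ(d)`, which is `1` if `t` is
coprime to `P` and `0` otherwise (`sum_moebius_dvd`). So the divisor sum is the sum of `2 ^ (-t)`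
over all positive `t` coprime to `P`. The term `t = 1` contributes `1 / 2`, which cancels the
`-1 / 2` in `theta`; any other such `t` has all its prime factors beyond `p_n`, hence is at least
`p_{n+1}` (`nthPrime_le_of_coprime`).
-/

open scoped BigOperators

/-- `nthPrime k` is the k-th prime with 1-based indexing: p₁ = 2, p₂ = 3, ... -/
noncomputable def nthPrime (k : ℕ) : ℕ := Nat.nth Nat.Prime (k - 1)

/-- `primorialN n` is `p_n# = p₁ ⬝ p₂ ⋯ p_n`, the product of the first `n` primes. -/
noncomputable def primorialN (n : ℕ) : ℕ := ∏ i ∈ Finset.range n, Nat.nth Nat.Prime i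

/-- `theta n = -1/2 + ∑_{d ∣ p_n#} μ(d)/(2^d - 1)`. -/
noncomputable def theta (n : ℕ) : ℝ :=
  -1/2 + ∑ d ∈ (primorialN n).divisors,
    ((ArithmeticFunction.moebius d : ℤ) : ℝ) / (2 ^ d - 1)

/-- The series `∑ 2 ^ (-t)` over the positive multiples `t` of `d`. -/
lemma hasSum_multiples (d : ℕ) (hd : d ≠ 0) :
    HasSum (fun t : ℕ => if t ≠ 0 ∧ d ∣ t then ((1 : ℝ) / 2) ^ t else 0)
      (1 / (2 ^ d - 1)) := by
  have hinj : Function.Injective (fun k : ℕ => d * (k + 1)) := by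
    intro a b h
    have := Nat.eq_of_mul_eq_mul_left (Nat.pos_of_ne_zero hd) h
    omega
  rw [← hinj.hasSum_iff]
  · have h2 : (1 : ℝ) < 2 ^ d := one_lt_pow₀ (by norm_num) hd
    have hlt : ((1 : ℝ) / 2) ^ d < 1 := pow_lt_one₀ (by norm_num) (by norm_num) hd
    have hg := (hasSum_geometric_of_lt_one (by positivity) hlt).mul_left (((1 : ℝ) / 2) ^ d)
    have hterm : (fun t : ℕ => if t ≠ 0 ∧ d ∣ t then ((1 : ℝ) / 2) ^ t else 0) ∘
        (fun k : ℕ => d * (k + 1)) = fun k => ((1 : ℝ) / 2) ^ d * (((1 : ℝ) / 2) ^ d) ^ k := by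
      funext k
      have h0 : d * (k + 1) ≠ 0 := mul_ne_zero hd (Nat.succ_ne_zero k)
      rw [Function.comp_apply, if_pos ⟨h0, dvd_mul_right _ _⟩, pow_mul, pow_succ']
    have hval : (1 : ℝ) / (2 ^ d - 1) = (1 / 2) ^ d * (1 - (1 / 2) ^ d)⁻¹ := by
      have h3 : (2 : ℝ) ^ d - 1 ≠ 0 := by linarith
      rw [one_div_pow]
      field_simp
    rw [hterm, hval]
    exact hg
  · intro t ht
    rw [if_neg]
    rintro ⟨h0, k, rfl⟩
    apply ht
    refine ⟨k - 1, ?_⟩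
    have : k ≠ 0 := by rintro rfl; simp at h0
    simp [Nat.sub_add_cancel (Nat.pos_of_ne_zero this)]

lemma sum_moebius_dvd (P t : ℕ) (hP : P ≠ 0) :
    ∑ d ∈ P.divisors, (if d ∣ t then ArithmeticFunction.moebius d else 0)
      = if Nat.gcd t P = 1 then 1 else 0 := by
  have h : P.divisors.filter (· ∣ t) = (Nat.gcd t P).divisors := by
    ext d
    simp [Nat.dvd_gcd_iff, hP, and_comm]
  rw [← Finset.sum_filter, h, ← ArithmeticFunction.coe_mul_zeta_apply,
    ArithmeticFunction.moebius_mul_coe_zeta, ArithmeticFunction.one_apply]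

lemma primorialN_ne_zero (n : ℕ) : primorialN n ≠ 0 :=
  Finset.prod_ne_zero_iff.2 fun i _ => (Nat.prime_nth_prime i).ne_zero

/-- A prime below `p_{n+1}` is one of `p_1, …, p_n`, so the least prime factor of an integer
coprime to `p_n#` is at least `p_{n+1}`. -/
lemma nthPrime_le_of_coprime (n t : ℕ) (h0 : t ≠ 0) (h1 : t ≠ 1)
    (h : Nat.gcd t (primorialN n) = 1) : nthPrime (n + 1) ≤ t := by
  have hp := Nat.minFac_prime h1
  refine le_trans ?_ (Nat.minFac_le (Nat.pos_of_ne_zero h0))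
  by_contra! hlt
  have hc := Nat.nth_count hp
  have hcn : Nat.count Nat.Prime t.minFac < n := by
    rw [nthPrime, Nat.add_sub_cancel, ← hc] at hlt
    exact (Nat.nth_lt_nth Nat.infinite_setOfPred_prime).1 hlt
  have hd : t.minFac ∣ primorialN n := by
    have := Finset.dvd_prod_of_mem (Nat.nth Nat.Prime) (Finset.mem_range.2 hcn)
    rwa [hc] at this
  exact Nat.not_coprime_of_dvd_of_dvd hp.one_lt (Nat.minFac_dvd t) hd h

/-- For every positive integer `n`,
`θ(n) = ∑_{t ≥ p_{n+1}, gcd(t, p_n#) = 1} 2^(-t)`. -/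
theorem theta_eq_sum_from_next_prime (n : ℕ) (hn : 0 < n) :
    theta n = ∑' t : {t : ℕ // nthPrime (n + 1) ≤ t ∧ Nat.gcd t (primorialN n) = 1},
        (2 : ℝ) ^ (-(t.val : ℤ)) := by
  have hP := primorialN_ne_zero n
  have hsum := hasSum_sum (s := (primorialN n).divisors) fun d hd =>
    (hasSum_multiples d (Nat.pos_of_mem_divisors hd).ne').mul_left
      ((ArithmeticFunction.moebius d : ℤ) : ℝ)
  have hone : HasSum (fun t : ℕ => if t = 1 then (1 : ℝ) / 2 else 0) (1 / 2) :=
    hasSum_ite_eq 1 _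
  have hdiff := hsum.sub hone
  have hS : HasSum (Set.indicator {t : ℕ | nthPrime (n + 1) ≤ t ∧ Nat.gcd t (primorialN n) = 1}
      fun t : ℕ => (2 : ℝ) ^ (-(t : ℤ))) (theta n) := by
    refine (congrArg₂ (fun f a => HasSum f a) ?_ ?_).mpr hdiff
    · funext t
      have hcoef : ∑ d ∈ (primorialN n).divisors, ((ArithmeticFunction.moebius d : ℤ) : ℝ) *
          (if t ≠ 0 ∧ d ∣ t then ((1 : ℝ) / 2) ^ t else 0)
          = if t ≠ 0 ∧ Nat.gcd t (primorialN n) = 1 then ((1 : ℝ) / 2) ^ t else 0 := by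
        by_cases h0 : t = 0
        · simp [h0]
        · have h := congrArg (fun z : ℤ => (z : ℝ) * ((1 : ℝ) / 2) ^ t)
            (sum_moebius_dvd (primorialN n) t hP)
          simp only [Int.cast_sum, Finset.sum_mul] at h
          simpa [h0, ite_mul] using h
      have hprime : 2 ≤ nthPrime (n + 1) := (Nat.prime_nth_prime _).two_le
      have hpow : (2 : ℝ) ^ (-(t : ℤ)) = (1 / 2) ^ t := by simp
      rw [hcoef, Set.indicator_apply, hpow]
      simp only [Set.mem_ofPred_eq]
      by_cases h1 : t = 1
      · subst h1
        rw [if_neg (by omega)]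
        simp
      · have hiff : (nthPrime (n + 1) ≤ t ∧ Nat.gcd t (primorialN n) = 1) ↔
            (t ≠ 0 ∧ Nat.gcd t (primorialN n) = 1) :=
          ⟨fun h => ⟨by omega, h.2⟩, fun h => ⟨nthPrime_le_of_coprime n t h.1 h1 h.2, h.2⟩⟩
        simp only [hiff, h1, if_false, sub_zero]
    · simp only [theta, mul_one_div]
      ring
  rw [← hS.tsum_eq]
  exact (tsum_subtype _ _).symm
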